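/- Let n ≥ 3, R₀ > 0, and C_S ≥ 0. Let u : {x ∈ ℝⁿ : |x| > R₀} → ℝ be bounded and continuously differentiable with locally Lipschitz gradient, and let S be a continuous map from {|x| > R₀} to the symmetric n×n real matrices with operator norm bound ‖S(x)‖ ≤ C_S·|x|^{−4}. Assume that for almost every x with |x| > R₀, ∇u is differentiable at x with derivative matrix H(x), and for every v ∈ ℝⁿ: (n−2)⟨H(x)v, v⟩ + (tr H(x))|v|² + (n−2)⟨∇u(x), v⟩² − (n−2)|∇u(x)|²|v|² + ⟨S(x)v, v⟩ ≥ 0. Then ∫_{|x| > 2R₀} |∇u(x)|ⁿ dx < ∞. -/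

import Mathlib

open MeasureTheory RealInnerProductSpace
open Filter Metric Module Set Topology

/-!
Evaluated at `v = ∇u`, the curvature condition says that the `n`-Laplacian
`div (|∇u|^(n-2) ∇u)` is at least `-‖S‖ |∇u|^(n-2)`. Integrate the divergence of
`φ^n (u + M) |∇u|^(n-2) ∇u`, where `|u| ≤ M` and `φ` is a cutoff supported in the end. Young's
inequality absorbs the error terms into the energy, leaving `∫ φ^n |∇u|^n` bounded by the `n`-energy
of `φ` and by `∫ ‖S‖^(n/2)`. The first is invariant under scaling, so it stays bounded while the
cutoffs exhaust the end; the second is finite by the decay of `S`.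
-/

section LocallyLipschitz

variable {α β γ : Type*}

lemma locallyLipschitzOn_comp [PseudoEMetricSpace α] [PseudoEMetricSpace β] [PseudoEMetricSpace γ]
    {s : Set α} {f : α → β} {g : β → γ} (hg : LocallyLipschitz g) (hf : LocallyLipschitzOn s f) :
    LocallyLipschitzOn s (fun x ↦ g (f x)) := by
  intro x hx
  obtain ⟨K, t, ht, hft⟩ := hf hx
  obtain ⟨K', t', ht', hgt'⟩ := hg (f x)
  have hpre : f ⁻¹' t' ∈ 𝓝[s] x := hf.continuousOn x hx ht'
  exact ⟨K' * K, t ∩ f ⁻¹' t', inter_mem ht hpre,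
    hgt'.comp (hft.mono inter_subset_left) fun _ hy ↦ hy.2⟩

lemma locallyLipschitzOn_prodMk [PseudoEMetricSpace α] [PseudoEMetricSpace β]
    [PseudoEMetricSpace γ] {s : Set α} {f : α → β} {g : α → γ} (hf : LocallyLipschitzOn s f)
    (hg : LocallyLipschitzOn s g) : LocallyLipschitzOn s (fun x ↦ (f x, g x)) := by
  intro x hx
  obtain ⟨K, t, ht, hft⟩ := hf hx
  obtain ⟨K', t', ht', hgt'⟩ := hg hx
  exact ⟨max K K', t ∩ t', inter_mem ht ht',
    (hft.mono inter_subset_left).prodMk (hgt'.mono inter_subset_right)⟩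

lemma locallyLipschitzOn_smul {F : Type*} [PseudoEMetricSpace α] [NormedAddCommGroup F]
    [NormedSpace ℝ F] {s : Set α} {f : α → ℝ} {g : α → F} (hf : LocallyLipschitzOn s f)
    (hg : LocallyLipschitzOn s g) : LocallyLipschitzOn s (fun x ↦ f x • g x) := by
  have hsmul : ContDiff ℝ 1 (fun p : ℝ × F ↦ p.1 • p.2) := contDiff_fst.smul contDiff_snd
  exact locallyLipschitzOn_comp hsmul.locallyLipschitz (locallyLipschitzOn_prodMk hf hg)

lemma locallyLipschitzOn_of_hasGradientAt {E : Type*} [NormedAddCommGroup E]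
    [InnerProductSpace ℝ E] [CompleteSpace E] {U : Set E} {u : E → ℝ} {G : E → E} (hU : IsOpen U)
    (hu : ∀ x ∈ U, HasGradientAt u (G x) x) (hG : ContinuousOn G U) : LocallyLipschitzOn U u := by
  intro x hx
  have hC1 : ContDiffAt ℝ 1 u x := contDiffAt_one_iff.mpr
    ⟨fun y ↦ innerSL ℝ (G y), U, hU.mem_nhds hx, (innerSL ℝ).continuous.comp_continuousOn hG,
      fun y hy ↦ (hu y hy).hasFDerivAt⟩
  obtain ⟨K, t, ht, hut⟩ := hC1.exists_lipschitzOnWith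
  exact ⟨K, t, mem_nhdsWithin_of_mem_nhds ht, hut⟩

lemma locallyLipschitz_of_tsupport_subset [PseudoEMetricSpace α] [PseudoEMetricSpace β] [Zero β]
    {U : Set α} {f : α → β} (hU : IsOpen U) (hf : LocallyLipschitzOn U f)
    (hsupp : tsupport f ⊆ U) : LocallyLipschitz f := by
  intro x
  by_cases hx : x ∈ tsupport f
  · obtain ⟨K, t, ht, hft⟩ := hf (hsupp hx)
    exact ⟨K, t, hU.nhdsWithin_eq (hsupp hx) ▸ ht, hft⟩
  · refine ⟨0, {y | f y = 0}, notMem_tsupport_iff_eventuallyEq.mp hx, fun y hy z hz ↦ ?_⟩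
    rw [mem_ofPred_eq.mp hy, mem_ofPred_eq.mp hz, edist_self]
    exact zero_le

lemma exists_lipschitzWith_of_hasCompactSupport {F : Type*} [PseudoMetricSpace α] [ProperSpace α]
    [NormedAddCommGroup F] {f : α → F} (hf : LocallyLipschitz f) (hc : HasCompactSupport f) :
    ∃ K, LipschitzWith K f := by
  obtain ⟨K, hK⟩ := LocallyLipschitzOn.exists_lipschitzOnWith_of_compact
    (hc.isCompact.cthickening (r := 1)) hf.locallyLipschitzOn
  obtain ⟨C, hC⟩ := hc.exists_bound_of_continuous hf.continuous
  have dist_le_of_mem (x y : α) (hx : x ∈ tsupport f) :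
      dist (f x) (f y) ≤ max K C.toNNReal * dist x y := by
    by_cases hy : y ∈ cthickening 1 (tsupport f)
    · calc dist (f x) (f y) ≤ K * dist x y :=
            hK.dist_le_mul x (self_subset_cthickening _ hx) y hy
        _ ≤ max K C.toNNReal * dist x y := by gcongr; exact le_max_left _ _
    · have hfy : f y = 0 :=
        image_eq_zero_of_notMem_tsupport fun h ↦ hy (self_subset_cthickening _ h)
      have hxy : 1 ≤ dist x y := by
        by_contra! h
        exact hy (mem_cthickening_of_dist_le y x 1 _ hx (dist_comm x y ▸ h.le))
      calc dist (f x) (f y) ≤ C.toNNReal * 1 := by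
            rw [hfy, dist_zero_right, mul_one]
            exact (hC x).trans (Real.le_coe_toNNReal C)
        _ ≤ max K C.toNNReal * dist x y := by gcongr; exact le_max_right _ _
  refine ⟨max K C.toNNReal, LipschitzWith.of_dist_le_mul fun x y ↦ ?_⟩
  by_cases hx : x ∈ tsupport f
  · exact dist_le_of_mem x y hx
  by_cases hy : y ∈ tsupport f
  · rw [dist_comm, dist_comm x]
    exact dist_le_of_mem y x hy
  · rw [image_eq_zero_of_notMem_tsupport hx, image_eq_zero_of_notMem_tsupport hy, dist_self]
    positivity

end LocallyLipschitz

lemma integrable_norm_fderiv_pow {E F : Type*} [NormedAddCommGroup E] [NormedSpace ℝ E]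
    [MeasurableSpace E] [OpensMeasurableSpace E] {μ : Measure E} [IsFiniteMeasureOnCompacts μ]
    [NormedAddCommGroup F] [NormedSpace ℝ F] {f : E → F} (hf : ContDiff ℝ 1 f)
    (hc : HasCompactSupport f) {j : ℕ} (hj : j ≠ 0) :
    Integrable (fun x ↦ ‖fderiv ℝ f x‖ ^ j) μ :=
  ((hf.continuous_fderiv one_ne_zero).norm.pow j).integrable_of_hasCompactSupport
    ((hc.fderiv ℝ).comp_left (g := fun L ↦ ‖L‖ ^ j) (by simp [hj]))

section Divergence

variable {E F : Type*} [NormedAddCommGroup E] [NormedSpace ℝ E]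

/-- The divergence of the vector field `X`, as the trace of its derivative; it is `0` at points
where `X` is not differentiable. -/
noncomputable def divergence (X : E → E) (x : E) : ℝ := LinearMap.trace ℝ E (fderiv ℝ X x)

lemma divergence_smul [FiniteDimensional ℝ E] {ζ : E → ℝ} {X : E → E} {x : E}
    (hζ : DifferentiableAt ℝ ζ x) (hX : DifferentiableAt ℝ X x) :
    divergence (fun y ↦ ζ y • X y) x = ζ x * divergence X x + fderiv ℝ ζ x (X x) := by
  have hsmulRight : ((fderiv ℝ ζ x).smulRight (X x) : E →L[ℝ] E).toLinearMap
      = (fderiv ℝ ζ x).toLinearMap.smulRight (X x) := rfl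
  simp only [divergence, fderiv_fun_smul hζ hX, ContinuousLinearMap.toLinearMap_add,
    ContinuousLinearMap.toLinearMap_smul, map_add, map_smul, smul_eq_mul, hsmulRight,
    LinearMap.trace_smulRight, ContinuousLinearMap.coe_coe]

lemma divergence_eq_zero_of_notMem_tsupport {X : E → E} {x : E} (hx : x ∉ tsupport X) :
    divergence X x = 0 := by
  have hfderiv : fderiv ℝ X x = 0 :=
    image_eq_zero_of_notMem_tsupport fun h ↦ hx (tsupport_fderiv_subset ℝ h)
  rw [divergence, hfderiv, ContinuousLinearMap.toLinearMap_zero, map_zero]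

variable [FiniteDimensional ℝ E] [MeasurableSpace E] [BorelSpace E] {μ : Measure E}
  [μ.IsAddHaarMeasure] [NormedAddCommGroup F] [NormedSpace ℝ F] [FiniteDimensional ℝ F]

lemma integrable_fderiv_of_lipschitzWith {X : E → F} {K} (hX : LipschitzWith K X)
    (hc : HasCompactSupport X) : Integrable (fderiv ℝ X) μ :=
  (integrableOn_iff_integrable_of_support_subset (support_fderiv_subset ℝ)).mp <|
    Measure.integrableOn_of_bounded (M := K) hc.isCompact.measure_lt_top.ne
      (measurable_fderiv ℝ X).aestronglyMeasurable
      (ae_of_all _ fun _ ↦ norm_fderiv_le_of_lipschitz ℝ hX)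

lemma integral_fderiv_eq_zero {X : E → F} {K} (hX : LipschitzWith K X)
    (hc : HasCompactSupport X) : ∫ x, fderiv ℝ X x ∂μ = 0 := by
  have hint := integrable_fderiv_of_lipschitzWith (μ := μ) hX hc
  ext v
  refine SeparatingDual.eq_zero_of_forall_dual_eq_zero (R := ℝ) fun g ↦ ?_
  have hgX := g.lipschitz.comp hX
  have hgXc : HasCompactSupport (g ∘ X) := hc.comp_left (map_zero g)
  calc g ((∫ x, fderiv ℝ X x ∂μ) v) = ∫ x, g (fderiv ℝ X x v) ∂μ := by
        rw [ContinuousLinearMap.integral_apply hint,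
          g.integral_comp_comm (hint.apply_continuousLinearMap v)]
    _ = ∫ x, lineDeriv ℝ (g ∘ X) x v ∂μ := by
        refine integral_congr_ae ?_
        filter_upwards [hX.ae_differentiableAt (μ := μ)] with x hx
        exact ((g.hasFDerivAt.comp x hx.hasFDerivAt).hasLineDerivAt v).lineDeriv.symm
    _ = 0 := by
        have := (LipschitzWith.const (1 : ℝ)).integral_lineDeriv_mul_eq (μ := μ) hgX hgXc (-v)
        simpa [lineDeriv] using this.symm

lemma integrable_divergence {X : E → E} {K} (hX : LipschitzWith K X) (hc : HasCompactSupport X) :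
    Integrable (divergence X) μ :=
  (LinearMap.toContinuousLinearMap
    ((LinearMap.trace ℝ E).comp (ContinuousLinearMap.coeLM ℝ))).integrable_comp
    (integrable_fderiv_of_lipschitzWith hX hc)

lemma integral_divergence_eq_zero {X : E → E} {K} (hX : LipschitzWith K X)
    (hc : HasCompactSupport X) : ∫ x, divergence X x ∂μ = 0 := by
  let T := LinearMap.toContinuousLinearMap
    ((LinearMap.trace ℝ E).comp (ContinuousLinearMap.coeLM ℝ))
  calc ∫ x, divergence X x ∂μ = T (∫ x, fderiv ℝ X x ∂μ) :=
        T.integral_comp_comm (integrable_fderiv_of_lipschitzWith hX hc)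
    _ = 0 := by rw [integral_fderiv_eq_zero hX hc, map_zero]

lemma lintegral_ofReal_le_of_le_divergence_add {X : E → E} {K} (hX : LipschitzWith K X)
    (hc : HasCompactSupport X) {f g : E → ℝ} {c : ℝ} (hf : 0 ≤ f) (hg : Integrable g μ)
    (hfg : ∀ᵐ x ∂μ, f x ≤ c * divergence X x + g x) :
    ∫⁻ x, ENNReal.ofReal (f x) ∂μ ≤ ENNReal.ofReal (∫ x, g x ∂μ) := by
  have hdiv := (integrable_divergence (μ := μ) hX hc).const_mul c
  have hsum : Integrable (fun x ↦ c * divergence X x + g x) μ := hdiv.add hg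
  have hint : ∫ x, (c * divergence X x + g x) ∂μ = ∫ x, g x ∂μ := by
    rw [integral_add hdiv hg, integral_const_mul, integral_divergence_eq_zero hX hc, mul_zero,
      zero_add]
  rw [← hint, ofReal_integral_eq_lintegral_ofReal hsum
    (hfg.mono fun x hx ↦ (hf x).trans hx)]
  exact lintegral_mono_ae (hfg.mono fun x hx ↦ ENNReal.ofReal_le_ofReal hx)

end Divergence

section PFlux

variable {E : Type*} [NormedAddCommGroup E] [InnerProductSpace ℝ E]

lemma hasFDerivAt_norm_of_ne_zero {w : E} (hw : w ≠ 0) :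
    HasFDerivAt (fun v : E ↦ ‖v‖) (‖w‖⁻¹ • innerSL ℝ w) w := by
  have hsqrt := (hasStrictFDerivAt_norm_sq w).hasFDerivAt.sqrt (by simpa using hw)
  simp only [Real.sqrt_sq (norm_nonneg _)] at hsqrt
  refine hsqrt.congr_fderiv ?_
  rw [← Nat.cast_smul_eq_nsmul ℝ, smul_smul]
  congr 1
  field_simp
  norm_num

-- At `w = 0` the last coefficient vanishes for every `k`, since `x / 0 = 0`.
lemma hasFDerivAt_norm_pow_smul (k : ℕ) (w : E) :
    HasFDerivAt (fun v : E ↦ ‖v‖ ^ k • v)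
      (‖w‖ ^ k • ContinuousLinearMap.id ℝ E
        + (k * ‖w‖ ^ k / ‖w‖ ^ 2) • (innerSL ℝ w).smulRight w) w := by
  rcases eq_or_ne w 0 with rfl | hw
  · rcases eq_or_ne k 0 with rfl | hk
    · simpa [Function.id_def] using hasFDerivAt_id (𝕜 := ℝ) (0 : E)
    · have hnorm : (fun v : E ↦ ‖v‖ ^ k) =o[𝓝 0] fun _ ↦ (1 : ℝ) := by
        rw [Asymptotics.isLittleO_one_iff]
        exact (continuous_norm.pow k).tendsto' _ _ (by simp [hk])
      have hsmul := hnorm.smul_isBigO (Asymptotics.isBigO_refl (fun v : E ↦ v) (𝓝 0))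
      simpa [hasFDerivAt_iff_isLittleO, hk] using hsmul
  · refine (((hasFDerivAt_norm_of_ne_zero hw).pow k).fun_smul (hasFDerivAt_id w)).congr_fderiv ?_
    have hcoeff : (k : ℝ) * ‖w‖ ^ (k - 1) * ‖w‖⁻¹ = k * ‖w‖ ^ k / ‖w‖ ^ 2 := by
      rcases k with _ | k
      · simp
      · rw [Nat.add_sub_cancel, pow_succ]
        field_simp
    ext v
    simp [← hcoeff, smul_smul, mul_assoc]

/-- The flux `|G|^(p-2) G` of the `p`-Laplacian with `p = k + 2`: when `G` is the gradient of `u`,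
its divergence is the `p`-Laplacian of `u`. -/
def pFlux (k : ℕ) (G : E → E) (x : E) : E := ‖G x‖ ^ k • G x

variable {k : ℕ} {G : E → E} {H : E →L[ℝ] E} {x : E}

lemma norm_pFlux : ‖pFlux k G x‖ = ‖G x‖ ^ (k + 1) := by
  rw [pFlux, norm_smul, norm_pow, norm_norm, pow_succ]

lemma inner_pFlux_self : ⟪G x, pFlux k G x⟫ = ‖G x‖ ^ (k + 2) := by
  rw [pFlux, real_inner_smul_right, real_inner_self_eq_norm_sq, pow_add]

lemma locallyLipschitzOn_pFlux {s : Set E} (hG : LocallyLipschitzOn s G) :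
    LocallyLipschitzOn s (pFlux k G) := by
  have hpow : LocallyLipschitz fun t : ℝ ↦ t ^ k :=
    (contDiff_fun_id (𝕜 := ℝ).pow k).locallyLipschitz
  exact locallyLipschitzOn_smul
    (locallyLipschitzOn_comp hpow
      (locallyLipschitzOn_comp lipschitzWith_one_norm.locallyLipschitz hG)) hG

lemma hasFDerivAt_pFlux (hG : HasFDerivAt G H x) :
    HasFDerivAt (pFlux k G)
      (‖G x‖ ^ k • H + (k * ‖G x‖ ^ k / ‖G x‖ ^ 2) • ((innerSL ℝ (G x)).comp H).smulRight (G x))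
      x := by
  refine ((hasFDerivAt_norm_pow_smul k (G x)).comp x hG).congr_fderiv ?_
  ext v
  simp

variable [FiniteDimensional ℝ E]

lemma divergence_pFlux (hG : HasFDerivAt G H x) :
    divergence (pFlux k G) x = ‖G x‖ ^ k * LinearMap.trace ℝ E H
      + k * ‖G x‖ ^ k / ‖G x‖ ^ 2 * ⟪H (G x), G x⟫ := by
  have hsmulRight : (((innerSL ℝ (G x)).comp H).smulRight (G x) : E →L[ℝ] E).toLinearMap
      = ((innerSL ℝ (G x)).comp H).toLinearMap.smulRight (G x) := rfl
  rw [divergence, (hasFDerivAt_pFlux hG).fderiv, ContinuousLinearMap.toLinearMap_add,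
    ContinuousLinearMap.toLinearMap_smul, ContinuousLinearMap.toLinearMap_smul, hsmulRight,
    map_add, map_smul, map_smul, LinearMap.trace_smulRight, real_inner_comm]
  rfl

lemma neg_mul_norm_pow_le_divergence_pFlux [Nontrivial E] {c : ℝ} (hG : HasFDerivAt G H x)
    (hH : ∀ v, 0 ≤ k * ⟪H v, v⟫ + LinearMap.trace ℝ E H * ‖v‖ ^ 2 + c * ‖v‖ ^ 2) :
    -(c * ‖G x‖ ^ k) ≤ divergence (pFlux k G) x := by
  rw [divergence_pFlux hG]
  rcases eq_or_ne (G x) 0 with hGx | hGx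
  · rcases eq_or_ne k 0 with rfl | hk
    · obtain ⟨v, hv⟩ := exists_norm_eq E zero_le_one
      have := hH v
      simp only [hv, Nat.cast_zero, zero_mul, one_pow, mul_one, zero_add] at this
      simp only [pow_zero, Nat.cast_zero, zero_mul, zero_div, mul_one, one_mul, add_zero]
      linarith
    · simp [hGx, hk]
  · have hscaled := mul_nonneg (by positivity : 0 ≤ ‖G x‖ ^ k / ‖G x‖ ^ 2) (hH (G x))
    calc -(c * ‖G x‖ ^ k) ≤ -(c * ‖G x‖ ^ k) + _ := le_add_of_nonneg_right hscaled
      _ = ‖G x‖ ^ k * LinearMap.trace ℝ E H + k * ‖G x‖ ^ k / ‖G x‖ ^ 2 * ⟪H (G x), G x⟫ := by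
        field_simp
        ring

lemma neg_opNorm_mul_norm_pow_le_divergence_pFlux [Nontrivial E] {S : E →L[ℝ] E}
    (hG : HasFDerivAt G H x)
    (hH : ∀ v, 0 ≤ k * ⟪H v, v⟫ + LinearMap.trace ℝ E H * ‖v‖ ^ 2 + k * ⟪G x, v⟫ ^ 2
      - k * ‖G x‖ ^ 2 * ‖v‖ ^ 2 + ⟪S v, v⟫) :
    -(‖S‖ * ‖G x‖ ^ k) ≤ divergence (pFlux k G) x := by
  refine neg_mul_norm_pow_le_divergence_pFlux hG fun v ↦ (hH v).trans ?_
  have hGv : k * ⟪G x, v⟫ ^ 2 ≤ k * ‖G x‖ ^ 2 * ‖v‖ ^ 2 := by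
    rw [mul_assoc, ← mul_pow, ← sq_abs]
    gcongr
    exact abs_real_inner_le_norm _ _
  have hSv : ⟪S v, v⟫ ≤ ‖S‖ * ‖v‖ ^ 2 :=
    calc ⟪S v, v⟫ ≤ ‖S v‖ * ‖v‖ := real_inner_le_norm _ _
      _ ≤ ‖S‖ * ‖v‖ * ‖v‖ := by gcongr; exact S.le_opNorm v
      _ = ‖S‖ * ‖v‖ ^ 2 := by ring
  linarith

end PFlux

lemma young_inequality_pow {a b : ℝ} (ha : 0 ≤ a) (hb : 0 ≤ b) (j : ℕ) {i : ℕ} (hi : i ≠ 0) :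
    a ^ j * b ^ i ≤ a ^ (j + i) / 4 + 4 ^ j * b ^ (j + i) := by
  rcases le_total b (a / 4) with hba | hab
  · have hquarter : (1 / 4 : ℝ) ^ i ≤ 1 / 4 := pow_le_of_le_one (by norm_num) (by norm_num) hi
    calc a ^ j * b ^ i ≤ a ^ j * (a / 4) ^ i := by gcongr
      _ = a ^ (j + i) * (1 / 4) ^ i := by ring
      _ ≤ a ^ (j + i) * (1 / 4) := by gcongr
      _ ≤ _ := by rw [mul_one_div]; exact le_add_of_nonneg_right (by positivity)
  · calc a ^ j * b ^ i ≤ (4 * b) ^ j * b ^ i := by gcongr; linarith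
      _ = 4 ^ j * b ^ (j + i) := by ring
      _ ≤ _ := le_add_of_nonneg_left (by positivity)

section Caccioppoli

variable {E : Type*} [NormedAddCommGroup E] [InnerProductSpace ℝ E] {k : ℕ} {m : ℝ}
  {φ u q : E → ℝ} {G : E → E}

/-- The vector field `φ^p u |∇u|^(p-2) ∇u` with `p = k + 2` and `G = ∇u`, the test field of the
Caccioppoli inequality. -/
def caccioppoliField (k : ℕ) (φ u : E → ℝ) (G : E → E) (x : E) : E :=
  (φ x ^ (k + 2) * u x) • pFlux k G x

lemma tsupport_caccioppoliField_subset : tsupport (caccioppoliField k φ u G) ⊆ tsupport φ :=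
  closure_mono fun x hx hφ ↦ hx (by simp [caccioppoliField, hφ])

lemma neg_mul_divergence_pFlux_le {x : E} (hu₀ : 0 ≤ u x) (hum : u x ≤ m) (hφ₀ : 0 ≤ φ x)
    (hφ₁ : φ x ≤ 1) (hq : -(q x * ‖G x‖ ^ k) ≤ divergence (pFlux k G) x) :
    -(φ x ^ (k + 2) * u x * divergence (pFlux k G) x)
      ≤ (φ x * ‖G x‖) ^ k * (√m * √(q x)) ^ 2 := by
  have hq_le : q x ≤ √(q x) ^ 2 := (Real.sqrt_le_iff.mp le_rfl).2
  have hdiv : -divergence (pFlux k G) x ≤ √(q x) ^ 2 * ‖G x‖ ^ k :=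
    (neg_le.mp hq).trans (by gcongr)
  calc -(φ x ^ (k + 2) * u x * divergence (pFlux k G) x)
      = φ x ^ (k + 2) * u x * -divergence (pFlux k G) x := by ring
    _ ≤ φ x ^ (k + 2) * u x * (√(q x) ^ 2 * ‖G x‖ ^ k) := by gcongr
    _ ≤ φ x ^ k * m * (√(q x) ^ 2 * ‖G x‖ ^ k) := by
        gcongr ?_ * ?_ * _
        exact pow_le_pow_of_le_one hφ₀ hφ₁ (Nat.le_add_right k 2)
    _ = (φ x * ‖G x‖) ^ k * (√m * √(q x)) ^ 2 := by
        rw [mul_pow √m, Real.sq_sqrt (hu₀.trans hum)]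
        ring

lemma neg_mul_fderiv_pFlux_le {x : E} (hu₀ : 0 ≤ u x) (hum : u x ≤ m) (hφ₀ : 0 ≤ φ x) :
    -(u x * ((k + 2) * φ x ^ (k + 1)) * fderiv ℝ φ x (pFlux k G x))
      ≤ (φ x * ‖G x‖) ^ (k + 1) * (m * (k + 2) * ‖fderiv ℝ φ x‖) := by
  have hfderiv : -fderiv ℝ φ x (pFlux k G x) ≤ ‖fderiv ℝ φ x‖ * ‖G x‖ ^ (k + 1) :=
    norm_pFlux (k := k) (G := G) ▸ (neg_le_abs _).trans ((fderiv ℝ φ x).le_opNorm _)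
  calc -(u x * ((k + 2) * φ x ^ (k + 1)) * fderiv ℝ φ x (pFlux k G x))
      = u x * ((k + 2) * φ x ^ (k + 1)) * -fderiv ℝ φ x (pFlux k G x) := by ring
    _ ≤ u x * ((k + 2) * φ x ^ (k + 1)) * (‖fderiv ℝ φ x‖ * ‖G x‖ ^ (k + 1)) := by gcongr
    _ ≤ m * ((k + 2) * φ x ^ (k + 1)) * (‖fderiv ℝ φ x‖ * ‖G x‖ ^ (k + 1)) := by gcongr
    _ = (φ x * ‖G x‖) ^ (k + 1) * (m * (k + 2) * ‖fderiv ℝ φ x‖) := by ring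

variable [FiniteDimensional ℝ E]

lemma divergence_caccioppoliField {x : E} (hφ : DifferentiableAt ℝ φ x)
    (hu : HasGradientAt u (G x) x) (hG : DifferentiableAt ℝ (pFlux k G) x) :
    divergence (caccioppoliField k φ u G) x
      = φ x ^ (k + 2) * u x * divergence (pFlux k G) x + (φ x * ‖G x‖) ^ (k + 2)
        + u x * ((k + 2) * φ x ^ (k + 1)) * fderiv ℝ φ x (pFlux k G x) := by
  have hζ := (hφ.hasFDerivAt.pow (k + 2)).fun_mul hu.hasFDerivAt
  have happly : fderiv ℝ (fun y ↦ φ y ^ (k + 2) * u y) x (pFlux k G x)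
      = φ x ^ (k + 2) * ⟪G x, pFlux k G x⟫
        + u x * ((k + 2) * φ x ^ (k + 1)) * fderiv ℝ φ x (pFlux k G x) := by
    rw [hζ.fderiv]
    simp only [nsmul_eq_mul, Nat.add_one_sub_one, Nat.cast_add, Nat.cast_ofNat,
      add_apply, smul_apply, smul_eq_mul, InnerProductSpace.toDual_apply_apply]
    ring
  rw [inner_pFlux_self] at happly
  have hdiv := divergence_smul hζ.differentiableAt hG
  rw [happly] at hdiv
  rw [mul_pow, add_assoc, ← hdiv]
  rfl

lemma pow_le_two_mul_divergence_caccioppoliField_add {x : E} (hu₀ : 0 ≤ u x) (hum : u x ≤ m)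
    (hφ₀ : 0 ≤ φ x) (hφ₁ : φ x ≤ 1) (hφ : DifferentiableAt ℝ φ x) (hu : HasGradientAt u (G x) x)
    (hG : DifferentiableAt ℝ (pFlux k G) x)
    (hq : -(q x * ‖G x‖ ^ k) ≤ divergence (pFlux k G) x) :
    (φ x * ‖G x‖) ^ (k + 2) ≤ 2 * divergence (caccioppoliField k φ u G) x
      + 2 * (4 ^ (k + 1) * (m * (k + 2) * ‖fderiv ℝ φ x‖) ^ (k + 2)
        + 4 ^ k * (√m * √(q x)) ^ (k + 2)) := by
  have hm : 0 ≤ m := hu₀.trans hum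
  -- Each error term costs a quarter of the energy, so half of it survives.
  have hφG : 0 ≤ φ x * ‖G x‖ := by positivity
  have hyoung_grad := young_inequality_pow hφG
    (by positivity : 0 ≤ m * (k + 2) * ‖fderiv ℝ φ x‖) (k + 1) one_ne_zero
  rw [pow_one, add_assoc k 1 1, one_add_one_eq_two] at hyoung_grad
  have hyoung_curv := young_inequality_pow hφG (by positivity : 0 ≤ √m * √(q x)) k two_ne_zero
  have hdiv := divergence_caccioppoliField hφ hu hG
  have hcurv := neg_mul_divergence_pFlux_le hu₀ hum hφ₀ hφ₁ hq
  have hgrad := neg_mul_fderiv_pFlux_le (k := k) (G := G) hu₀ hum hφ₀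
  linarith

variable {U : Set E}

lemma exists_lipschitzWith_caccioppoliField (hU : IsOpen U)
    (hu : ∀ x ∈ U, HasGradientAt u (G x) x) (hG : LocallyLipschitzOn U G) (hφ : ContDiff ℝ 1 φ)
    (hφc : HasCompactSupport φ) (hφU : tsupport φ ⊆ U) :
    ∃ K, LipschitzWith K (caccioppoliField k φ u G) := by
  have hζ : LocallyLipschitzOn U fun x ↦ φ x ^ (k + 2) * u x :=
    locallyLipschitzOn_smul (hφ.pow (k + 2)).locallyLipschitz.locallyLipschitzOn
      (locallyLipschitzOn_of_hasGradientAt hU hu hG.continuousOn)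
  have hX : LocallyLipschitzOn U (caccioppoliField k φ u G) :=
    locallyLipschitzOn_smul hζ (locallyLipschitzOn_pFlux hG)
  exact exists_lipschitzWith_of_hasCompactSupport
    (locallyLipschitz_of_tsupport_subset hU hX (tsupport_caccioppoliField_subset.trans hφU))
    (hφc.mono' (subset_closure.trans tsupport_caccioppoliField_subset))

variable [MeasurableSpace E] [BorelSpace E] {μ : Measure E} [μ.IsAddHaarMeasure]

theorem caccioppoli_inequality (hU : IsOpen U) (hu₀ : ∀ x ∈ U, 0 ≤ u x) (hum : ∀ x ∈ U, u x ≤ m)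
    (hu : ∀ x ∈ U, HasGradientAt u (G x) x) (hG : LocallyLipschitzOn U G)
    (hqint : IntegrableOn (fun x ↦ √(q x) ^ (k + 2)) U μ)
    (hq : ∀ᵐ x ∂μ, x ∈ U → DifferentiableAt ℝ (pFlux k G) x ∧
      -(q x * ‖G x‖ ^ k) ≤ divergence (pFlux k G) x)
    (hφ : ContDiff ℝ 1 φ) (hφc : HasCompactSupport φ) (hφ₀ : ∀ x, 0 ≤ φ x) (hφ₁ : ∀ x, φ x ≤ 1)
    (hφU : tsupport φ ⊆ U) :
    ∫⁻ x, ENNReal.ofReal ((φ x * ‖G x‖) ^ (k + 2)) ∂μ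
      ≤ ENNReal.ofReal (2 * (4 ^ (k + 1) * (m * (k + 2)) ^ (k + 2) *
            ∫ x, ‖fderiv ℝ φ x‖ ^ (k + 2) ∂μ
          + 4 ^ k * √m ^ (k + 2) * ∫ x in U, √(q x) ^ (k + 2) ∂μ)) := by
  obtain ⟨K, hK⟩ := exists_lipschitzWith_caccioppoliField (k := k) hU hu hG hφ hφc hφU
  have hdφ : Integrable (fun x ↦ ‖fderiv ℝ φ x‖ ^ (k + 2)) μ :=
    integrable_norm_fderiv_pow hφ hφc (k + 1).succ_ne_zero
  have hqind : Integrable (U.indicator fun x ↦ √(q x) ^ (k + 2)) μ :=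
    hqint.integrable_indicator hU.measurableSet
  have hgrad := hdφ.const_mul (4 ^ (k + 1) * (m * (k + 2)) ^ (k + 2))
  have hcurv := hqind.const_mul (4 ^ k * √m ^ (k + 2))
  rw [← integral_indicator hU.measurableSet, ← integral_const_mul, ← integral_const_mul,
    ← integral_add hgrad hcurv, ← integral_const_mul]
  refine lintegral_ofReal_le_of_le_divergence_add (c := 2) hK
    (hφc.mono' (subset_closure.trans tsupport_caccioppoliField_subset))
    (fun x ↦ pow_nonneg (mul_nonneg (hφ₀ x) (norm_nonneg _)) _)
    ((hgrad.add hcurv).const_mul 2) ?_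
  filter_upwards [hq] with x hqx
  by_cases hx : x ∈ tsupport φ
  · have hxU := hφU hx
    have hle := pow_le_two_mul_divergence_caccioppoliField_add (hu₀ x hxU) (hum x hxU)
      (hφ₀ x) (hφ₁ x) (hφ.differentiable one_ne_zero x) (hu x hxU) (hqx hxU).1 (hqx hxU).2
    simpa only [indicator_of_mem hxU, mul_pow, mul_assoc] using hle
  · have hφx : φ x = 0 := image_eq_zero_of_notMem_tsupport hx
    have hdφx : fderiv ℝ φ x = 0 :=
      image_eq_zero_of_notMem_tsupport fun h ↦ hx (tsupport_fderiv_subset ℝ h)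
    have hdiv := divergence_eq_zero_of_notMem_tsupport fun h ↦
      hx (tsupport_caccioppoliField_subset (k := k) (u := u) (G := G) h)
    have hind : 0 ≤ U.indicator (fun x ↦ √(q x) ^ (k + 2)) x :=
      indicator_nonneg (fun _ _ ↦ by positivity) x
    simp only [hφx, hdφx, hdiv, norm_zero, zero_mul, mul_zero, zero_add,
      zero_pow (k + 1).succ_ne_zero]
    positivity

lemma setLIntegral_norm_pow_le_of_eq_one {M : ℝ} {s : Set E} (hU : IsOpen U)
    (hs : MeasurableSet s) (huM : ∀ x ∈ U, |u x| ≤ M) (hu : ∀ x ∈ U, HasGradientAt u (G x) x)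
    (hG : LocallyLipschitzOn U G) (hqint : IntegrableOn (fun x ↦ √(q x) ^ (k + 2)) U μ)
    (hq : ∀ᵐ x ∂μ, x ∈ U → DifferentiableAt ℝ (pFlux k G) x ∧
      -(q x * ‖G x‖ ^ k) ≤ divergence (pFlux k G) x)
    (hφ : ContDiff ℝ 1 φ) (hφc : HasCompactSupport φ) (hφ₀ : ∀ x, 0 ≤ φ x) (hφ₁ : ∀ x, φ x ≤ 1)
    (hφU : tsupport φ ⊆ U) (hφs : ∀ x ∈ s, φ x = 1) :
    ∫⁻ x in s, ENNReal.ofReal (‖G x‖ ^ (k + 2)) ∂μ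
      ≤ ENNReal.ofReal (2 * (4 ^ (k + 1) * (2 * M * (k + 2)) ^ (k + 2) *
            ∫ x, ‖fderiv ℝ φ x‖ ^ (k + 2) ∂μ
          + 4 ^ k * √(2 * M) ^ (k + 2) * ∫ x in U, √(q x) ^ (k + 2) ∂μ)) :=
  calc ∫⁻ x in s, ENNReal.ofReal (‖G x‖ ^ (k + 2)) ∂μ
      = ∫⁻ x in s, ENNReal.ofReal ((φ x * ‖G x‖) ^ (k + 2)) ∂μ :=
        setLIntegral_congr_fun hs fun x hx ↦ by simp only [hφs x hx, one_mul]
    _ ≤ ∫⁻ x, ENNReal.ofReal ((φ x * ‖G x‖) ^ (k + 2)) ∂μ := setLIntegral_le_lintegral _ _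
    _ ≤ _ := caccioppoli_inequality (u := fun x ↦ u x + M) hU
        (fun x hx ↦ neg_le_iff_add_nonneg.mp (neg_le_of_abs_le (huM x hx)))
        (fun x hx ↦ by linarith [le_of_abs_le (huM x hx)])
        (fun x hx ↦ (hu x hx).hasFDerivAt.add_const M) hG hqint hq hφ hφc hφ₀ hφ₁ hφU

end Caccioppoli

section Cutoff

lemma norm_fderiv_mul_le {E : Type*} [NormedAddCommGroup E] [NormedSpace ℝ E] {f g : E → ℝ} {x : E}
    (hf : DifferentiableAt ℝ f x) (hg : DifferentiableAt ℝ g x) (hf₁ : |f x| ≤ 1)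
    (hg₁ : |g x| ≤ 1) : ‖fderiv ℝ (fun y ↦ f y * g y) x‖ ≤ ‖fderiv ℝ f x‖ + ‖fderiv ℝ g x‖ := by
  rw [fderiv_fun_mul hf hg, add_comm ‖fderiv ℝ f x‖]
  refine norm_add_le_of_le ?_ ?_ <;> rw [norm_smul, Real.norm_eq_abs]
  · exact mul_le_of_le_one_left (norm_nonneg _) hf₁
  · exact mul_le_of_le_one_left (norm_nonneg _) hg₁

lemma integral_norm_fderiv_comp_smul_pow_finrank {E F : Type*} [NormedAddCommGroup E]
    [NormedSpace ℝ E] [FiniteDimensional ℝ E] [MeasurableSpace E] [BorelSpace E] {μ : Measure E}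
    [μ.IsAddHaarMeasure] [NormedAddCommGroup F] [NormedSpace ℝ F] (f : E → F) {t : ℝ}
    (ht : t ≠ 0) :
    ∫ x, ‖fderiv ℝ (fun y ↦ f (t • y)) x‖ ^ finrank ℝ E ∂μ
      = ∫ x, ‖fderiv ℝ f x‖ ^ finrank ℝ E ∂μ := by
  have ht' : 0 < |t| ^ finrank ℝ E := by positivity
  simp only [fderiv_comp_smul, norm_smul, mul_pow, Real.norm_eq_abs, integral_const_mul]
  rw [Measure.integral_comp_smul μ (fun x ↦ ‖fderiv ℝ f x‖ ^ finrank ℝ E), smul_eq_mul, abs_inv,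
    abs_pow, mul_inv_cancel_left₀ ht'.ne']

variable {E : Type*} [NormedAddCommGroup E] [InnerProductSpace ℝ E] [FiniteDimensional ℝ E]
  {b χ : ContDiffBump (0 : E)} {t : ℝ} {x : E}

/-- The cutoff function which vanishes where the bump `b` is `1` and outside the dilate by `t⁻¹`
of the support of the bump `χ`. -/
noncomputable def annularCutoff (b χ : ContDiffBump (0 : E)) (t : ℝ) (x : E) : ℝ :=
  (1 - b x) * χ (t • x)

lemma contDiff_annularCutoff : ContDiff ℝ 1 (annularCutoff b χ t) :=
  (contDiff_const.sub b.contDiff).mul (χ.contDiff.comp (contDiff_const_smul t))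

lemma hasCompactSupport_annularCutoff (ht : t ≠ 0) : HasCompactSupport (annularCutoff b χ t) :=
  (χ.hasCompactSupport.comp_smul ht).mul_left

lemma annularCutoff_nonneg : 0 ≤ annularCutoff b χ t x :=
  mul_nonneg (sub_nonneg.mpr b.le_one) χ.nonneg

lemma annularCutoff_le_one : annularCutoff b χ t x ≤ 1 :=
  mul_le_one₀ (sub_le_self 1 b.nonneg) χ.nonneg χ.le_one

lemma tsupport_annularCutoff_subset : tsupport (annularCutoff b χ t) ⊆ {x | b.rIn ≤ ‖x‖} := by
  refine closure_minimal (fun x hx ↦ ?_) (isClosed_le continuous_const continuous_norm)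
  by_contra hxb
  have hb : b x = 1 := b.one_of_mem_closedBall (mem_closedBall_zero_iff.mpr (not_le.mp hxb).le)
  exact hx (by rw [annularCutoff, hb, sub_self, zero_mul])

lemma annularCutoff_eq_one (hb : b.rOut ≤ ‖x‖) (hχ : |t| * ‖x‖ ≤ χ.rIn) :
    annularCutoff b χ t x = 1 := by
  rw [annularCutoff, b.zero_of_le_dist (by rwa [dist_zero_right]), χ.one_of_mem_closedBall
    (by rwa [mem_closedBall_zero_iff, norm_smul, Real.norm_eq_abs]), sub_zero, mul_one]

lemma norm_fderiv_annularCutoff_le :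
    ‖fderiv ℝ (annularCutoff b χ t) x‖
      ≤ ‖fderiv ℝ b x‖ + ‖fderiv ℝ (fun y ↦ χ (t • y)) x‖ := by
  have hb : DifferentiableAt ℝ b x := b.contDiff.contDiffAt.differentiableAt (n := 1) one_ne_zero
  have hχ : DifferentiableAt ℝ (fun y ↦ χ (t • y)) x :=
    (χ.contDiff.comp (contDiff_const_smul t)).contDiffAt.differentiableAt (n := 1) one_ne_zero
  have hb₁ : |1 - b x| ≤ 1 :=
    abs_le.mpr ⟨by linarith [b.le_one (x := x)], sub_le_self 1 b.nonneg⟩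
  have hχ₁ : |χ (t • x)| ≤ 1 := by rw [abs_of_nonneg χ.nonneg]; exact χ.le_one
  have hle := norm_fderiv_mul_le (hb.const_sub 1) hχ hb₁ hχ₁
  rwa [fderiv_const_sub, norm_neg] at hle

variable [MeasurableSpace E] [BorelSpace E] {μ : Measure E} [μ.IsAddHaarMeasure]

-- Scale invariance of the `n`-energy makes the bound independent of `t`.
lemma integral_norm_fderiv_annularCutoff_pow_finrank_le [Nontrivial E] (ht : t ≠ 0) :
    ∫ x, ‖fderiv ℝ (annularCutoff b χ t) x‖ ^ finrank ℝ E ∂μ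
      ≤ 2 ^ (finrank ℝ E - 1) * (∫ x, ‖fderiv ℝ b x‖ ^ finrank ℝ E ∂μ
        + ∫ x, ‖fderiv ℝ χ x‖ ^ finrank ℝ E ∂μ) := by
  have hn : finrank ℝ E ≠ 0 := finrank_pos.ne'
  have hbint := integrable_norm_fderiv_pow (μ := μ) b.contDiff b.hasCompactSupport hn
  have hχint : Integrable (fun x ↦ ‖fderiv ℝ (fun y ↦ χ (t • y)) x‖ ^ finrank ℝ E) μ :=
    integrable_norm_fderiv_pow (χ.contDiff.comp (contDiff_const_smul t))
      (χ.hasCompactSupport.comp_smul ht) hn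
  rw [← integral_norm_fderiv_comp_smul_pow_finrank χ ht, ← integral_add hbint hχint,
    ← integral_const_mul]
  refine integral_mono (integrable_norm_fderiv_pow contDiff_annularCutoff
    (hasCompactSupport_annularCutoff ht) hn) ((hbint.add hχint).const_mul _) fun x ↦ ?_
  calc ‖fderiv ℝ (annularCutoff b χ t) x‖ ^ finrank ℝ E
      ≤ (‖fderiv ℝ b x‖ + ‖fderiv ℝ (fun y ↦ χ (t • y)) x‖) ^ finrank ℝ E := by
        gcongr
        exact norm_fderiv_annularCutoff_le
    _ ≤ _ := add_pow_le (norm_nonneg _) (norm_nonneg _) _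

lemma exists_cutoff_integral_norm_fderiv_pow_finrank_le [Nontrivial E] (μ : Measure E)
    [μ.IsAddHaarMeasure] {r R : ℝ} (hr : 0 ≤ r) (hrR : r < R) :
    ∃ I : ℝ, ∀ j : ℕ, ∃ φ : E → ℝ, ContDiff ℝ 1 φ ∧ HasCompactSupport φ ∧ (∀ x, 0 ≤ φ x) ∧
      (∀ x, φ x ≤ 1) ∧ tsupport φ ⊆ {x | r < ‖x‖} ∧
      (∀ x ∈ {x | R < ‖x‖} ∩ closedBall 0 j, φ x = 1) ∧
      ∫ x, ‖fderiv ℝ φ x‖ ^ finrank ℝ E ∂μ ≤ I := by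
  let b : ContDiffBump (0 : E) := ⟨(r + R) / 2, R, by linarith, by linarith⟩
  let χ : ContDiffBump (0 : E) := ⟨1, 2, one_pos, one_lt_two⟩
  refine ⟨2 ^ (finrank ℝ E - 1) * (∫ x, ‖fderiv ℝ b x‖ ^ finrank ℝ E ∂μ
    + ∫ x, ‖fderiv ℝ χ x‖ ^ finrank ℝ E ∂μ), fun j ↦ ?_⟩
  have ht : ((j : ℝ) + 1)⁻¹ ≠ 0 := by positivity
  refine ⟨annularCutoff b χ ((j : ℝ) + 1)⁻¹, contDiff_annularCutoff,
    hasCompactSupport_annularCutoff ht, fun x ↦ annularCutoff_nonneg,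
    fun x ↦ annularCutoff_le_one, tsupport_annularCutoff_subset.trans fun x hx ↦ ?_,
    fun x hx ↦ annularCutoff_eq_one ?_ ?_, integral_norm_fderiv_annularCutoff_pow_finrank_le ht⟩
  · have hx' : (r + R) / 2 ≤ ‖x‖ := hx
    exact show r < ‖x‖ by linarith
  · exact hx.1.le
  · have hxj : ‖x‖ ≤ j := mem_closedBall_zero_iff.mp hx.2
    rw [abs_of_pos (by positivity), inv_mul_le_iff₀ (by positivity)]
    exact show ‖x‖ ≤ ((j : ℝ) + 1) * 1 by linarith

end Cutoff

lemma setLIntegral_le_of_forall_inter_closedBall_le {α : Type*} [PseudoMetricSpace α]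
    [MeasurableSpace α] {μ : Measure α} {s : Set α} {f : α → ENNReal} {C : ENNReal} (x : α)
    (h : ∀ j : ℕ, ∫⁻ y in s ∩ closedBall x j, f y ∂μ ≤ C) : ∫⁻ y in s, f y ∂μ ≤ C := by
  have hmono : Monotone fun j : ℕ ↦ s ∩ closedBall x j := fun i j hij ↦
    inter_subset_inter_right s (closedBall_subset_closedBall (Nat.cast_le.mpr hij))
  have hs : s = ⋃ j : ℕ, s ∩ closedBall x j := by
    rw [← inter_iUnion, iUnion_closedBall_nat, inter_univ]
  rw [hs, setLIntegral_iUnion_of_directed f hmono.directed_le]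
  exact iSup_le h

section Decay

variable {E F : Type*} [NormedAddCommGroup E] [NormedSpace ℝ E] [FiniteDimensional ℝ E]
  [MeasurableSpace E] [BorelSpace E] {μ : Measure E} [μ.IsAddHaarMeasure] [NormedAddCommGroup F]
  {j : ℕ} {p : ENNReal}

lemma memLp_inv_one_add_norm_pow (hj : finrank ℝ E < j * p.toReal) :
    MemLp (fun x : E ↦ ((1 + ‖x‖) ^ j)⁻¹) p μ := by
  have hp : p.toReal ≠ 0 := fun hp ↦ by
    rw [hp, mul_zero] at hj
    exact hj.not_ge (Nat.cast_nonneg _)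
  have hcont : Continuous fun x : E ↦ ((1 + ‖x‖) ^ j)⁻¹ := by
    fun_prop (disch := intro x; positivity)
  rw [← integrable_norm_rpow_iff hcont.aestronglyMeasurable (ENNReal.toReal_ne_zero.mp hp).1
    (ENNReal.toReal_ne_zero.mp hp).2]
  convert integrable_one_add_norm (μ := μ) hj using 2 with x
  have hx : 0 ≤ 1 + ‖x‖ := by positivity
  rw [Real.norm_of_nonneg (by positivity), Real.inv_rpow (by positivity), ← Real.rpow_natCast,
    ← Real.rpow_mul hx, Real.rpow_neg hx]

lemma memLp_restrict_of_norm_le_div_norm_pow {f : E → F} {r C : ℝ} (hr : 0 < r)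
    (hf : AEStronglyMeasurable f (μ.restrict {x | r < ‖x‖}))
    (hfC : ∀ x, r < ‖x‖ → ‖f x‖ ≤ C / ‖x‖ ^ j) (hj : finrank ℝ E < j * p.toReal) :
    MemLp f p (μ.restrict {x | r < ‖x‖}) := by
  have hmeas : MeasurableSet {x : E | r < ‖x‖} :=
    (isOpen_lt continuous_const continuous_norm).measurableSet
  refine ((memLp_inv_one_add_norm_pow hj).restrict _).of_le_mul (c := C * (1 / r + 1) ^ j) hf ?_
  filter_upwards [ae_restrict_mem hmeas] with x hx
  have hx₀ : 0 < ‖x‖ := hr.trans hx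
  have hC : 0 ≤ C := by
    simpa using (le_div_iff₀ (pow_pos hx₀ j)).mp ((norm_nonneg _).trans (hfC x hx))
  have hle : 1 + ‖x‖ ≤ (1 / r + 1) * ‖x‖ := by
    rw [add_mul, one_mul, one_div_mul_eq_div]
    gcongr
    exact (one_le_div hr).mpr hx.le
  rw [Real.norm_of_nonneg (by positivity)]
  calc ‖f x‖ ≤ C / ‖x‖ ^ j := hfC x hx
    _ = C * (1 / r + 1) ^ j * (((1 / r + 1) * ‖x‖) ^ j)⁻¹ := by
        rw [mul_pow, mul_inv, mul_assoc, mul_inv_cancel_left₀ (by positivity), div_eq_mul_inv]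
    _ ≤ C * (1 / r + 1) ^ j * ((1 + ‖x‖) ^ j)⁻¹ := by gcongr

end Decay

lemma integrable_sqrt_norm_pow {α F : Type*} [MeasurableSpace α] {μ : Measure α}
    [NormedAddCommGroup F] {f : α → F} {n : ℕ} [NeZero n] (hf : MemLp f (n / 2) μ) :
    Integrable (fun x ↦ √‖f x‖ ^ n) μ := by
  have hn : (n / 2 : ENNReal) ≠ 0 := by simp [NeZero.ne n]
  have hn' : (n / 2 : ENNReal) ≠ ⊤ := by finiteness
  convert hf.integrable_norm_rpow hn hn' using 2 with x
  rw [Real.sqrt_eq_rpow, ← Real.rpow_natCast, ← Real.rpow_mul (norm_nonneg _),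
    ENNReal.toReal_div, ENNReal.toReal_natCast, ENNReal.toReal_ofNat, one_div_mul_eq_div]

theorem stmt_7_general {E : Type*} [NormedAddCommGroup E] [InnerProductSpace ℝ E]
    [FiniteDimensional ℝ E] [MeasurableSpace E] [BorelSpace E] (μ : Measure E)
    [μ.IsAddHaarMeasure] {n : ℕ} (hE : finrank ℝ E = n) (hn : 2 ≤ n) {R₀ R M : ℝ} (hR₀ : 0 ≤ R₀)
    (hR : R₀ < R) {u : E → ℝ} {G : E → E} (hubd : ∀ x, R₀ < ‖x‖ → |u x| ≤ M)
    (hgrad : ∀ x, R₀ < ‖x‖ → HasGradientAt u (G x) x)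
    (hlip : LocallyLipschitzOn {x | R₀ < ‖x‖} G) {S : E → E →L[ℝ] E}
    (hS : MemLp S (n / 2) (μ.restrict {x | R₀ < ‖x‖}))
    (hae : ∀ᵐ x ∂μ, R₀ < ‖x‖ → ∃ H : E →L[ℝ] E, HasFDerivAt G H x ∧
      ∀ v, 0 ≤ ((n : ℝ) - 2) * ⟪H v, v⟫ + LinearMap.trace ℝ E H * ‖v‖ ^ 2
        + ((n : ℝ) - 2) * ⟪G x, v⟫ ^ 2 - ((n : ℝ) - 2) * ‖G x‖ ^ 2 * ‖v‖ ^ 2 + ⟪S x v, v⟫) :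
    ∫⁻ x in {x | R < ‖x‖}, ENNReal.ofReal (‖G x‖ ^ n) ∂μ < ⊤ := by
  obtain ⟨k, rfl⟩ := Nat.exists_eq_add_of_le' hn
  have : Nontrivial E := nontrivial_of_finrank_pos (R := ℝ) (by omega)
  set U : Set E := {x | R₀ < ‖x‖}
  have hU : IsOpen U := isOpen_lt continuous_const continuous_norm
  have hM : 0 ≤ M :=
    have ⟨x, hx⟩ := NormedSpace.exists_lt_norm ℝ E R₀
    (abs_nonneg (u x)).trans (hubd x hx)
  have hae' : ∀ᵐ x ∂μ, x ∈ U → DifferentiableAt ℝ (pFlux k G) x ∧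
      -(‖S x‖ * ‖G x‖ ^ k) ≤ divergence (pFlux k G) x := by
    filter_upwards [hae] with x hx hxU
    obtain ⟨H, hH, hv⟩ := hx hxU
    refine ⟨(hasFDerivAt_pFlux hH).differentiableAt,
      neg_opNorm_mul_norm_pow_le_divergence_pFlux hH ?_⟩
    simpa using hv
  obtain ⟨I, hI⟩ := exists_cutoff_integral_norm_fderiv_pow_finrank_le μ hR₀ hR
  refine (setLIntegral_le_of_forall_inter_closedBall_le 0 fun j ↦ ?_).trans_lt
    (ENNReal.ofReal_lt_top (r := 2 * (4 ^ (k + 1) * (2 * M * (k + 2)) ^ (k + 2) * I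
      + 4 ^ k * √(2 * M) ^ (k + 2) * ∫ x in U, √‖S x‖ ^ (k + 2) ∂μ)))
  obtain ⟨φ, hφ, hφc, hφ₀, hφ₁, hφU, hφ_one, hφI⟩ := hI j
  rw [hE] at hφI
  have hs : MeasurableSet ({x | R < ‖x‖} ∩ closedBall (0 : E) j) :=
    (isOpen_lt continuous_const continuous_norm).measurableSet.inter
      isClosed_closedBall.measurableSet
  refine (setLIntegral_norm_pow_le_of_eq_one hU hs hubd hgrad hlip (integrable_sqrt_norm_pow hS)
    hae' hφ hφc hφ₀ hφ₁ hφU hφ_one).trans ?_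
  gcongr

theorem stmt_7 (n : ℕ) (hn : 3 ≤ n) (R₀ C_S : ℝ) (hR₀ : 0 < R₀) (hC_S : 0 ≤ C_S)
    (u : EuclideanSpace ℝ (Fin n) → ℝ)
    (G : EuclideanSpace ℝ (Fin n) → EuclideanSpace ℝ (Fin n))
    (M : ℝ) (hubd : ∀ x : EuclideanSpace ℝ (Fin n), R₀ < ‖x‖ → |u x| ≤ M)
    (hgrad : ∀ x : EuclideanSpace ℝ (Fin n), R₀ < ‖x‖ → HasGradientAt u (G x) x)
    (hlip : ∀ x : EuclideanSpace ℝ (Fin n), R₀ < ‖x‖ → ∃ s ∈ nhds x, ∃ K, LipschitzOnWith K G s)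
    (S : EuclideanSpace ℝ (Fin n) → EuclideanSpace ℝ (Fin n) →L[ℝ] EuclideanSpace ℝ (Fin n))
    (hScont : ContinuousOn S {x : EuclideanSpace ℝ (Fin n) | R₀ < ‖x‖})
    (hSsymm : ∀ x : EuclideanSpace ℝ (Fin n), R₀ < ‖x‖ → ∀ v w, ⟪S x v, w⟫ = ⟪v, S x w⟫)
    (hSbd : ∀ x : EuclideanSpace ℝ (Fin n), R₀ < ‖x‖ → ‖S x‖ ≤ C_S / ‖x‖^4)
    (hae : ∀ᵐ x ∂volume, R₀ < ‖x‖ →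
      ∃ H : EuclideanSpace ℝ (Fin n) →L[ℝ] EuclideanSpace ℝ (Fin n),
        HasFDerivAt G H x ∧
        ∀ v, 0 ≤ ((n : ℝ) - 2) * ⟪H v, v⟫
          + (LinearMap.trace ℝ _ H.toLinearMap) * ‖v‖^2
          + ((n : ℝ) - 2) * ⟪G x, v⟫^2
          - ((n : ℝ) - 2) * ‖G x‖^2 * ‖v‖^2
          + ⟪S x v, v⟫) :
    ∫⁻ x in {x : EuclideanSpace ℝ (Fin n) | 2*R₀ < ‖x‖},
        ENNReal.ofReal (‖G x‖ ^ n) < ⊤ := by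
  have hlip' : LocallyLipschitzOn {x | R₀ < ‖x‖} G := fun x hx ↦
    let ⟨s, hs, K, hK⟩ := hlip x hx
    ⟨K, s, mem_nhdsWithin_of_mem_nhds hs, hK⟩
  have hS : MemLp S (n / 2) (volume.restrict {x | R₀ < ‖x‖}) := by
    refine memLp_restrict_of_norm_le_div_norm_pow hR₀ (hScont.aestronglyMeasurable ?_) hSbd ?_
    · exact (isOpen_lt continuous_const continuous_norm).measurableSet
    · have hn₀ : (0 : ℝ) < n := by positivity
      simp only [finrank_euclideanSpace, Fintype.card_fin, Nat.cast_ofNat, ENNReal.toReal_div,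
        ENNReal.toReal_natCast, ENNReal.toReal_ofNat]
      linarith
  exact stmt_7_general volume finrank_euclideanSpace_fin (by omega) hR₀.le (by linarith) hubd hgrad
    hlip' hS hae
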